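/- arXiv:1003.2170 — 2 statements merged into one kernel-verified Lean document; each statement's English description precedes it below -/
import Mathlib

section
/- With α = ln(1+√2), one has Li₂(√2 − 1) − Li₂(1 − √2) = α²/2 − π²/8 + π²/4 − ln²(√2 − 1). -/
/-- The real dilogarithm Li₂(w) = ∑_{k=1}^∞ w^k/k², for |w| ≤ 1. -/
noncomputable def Li2 (w : ℝ) : ℝ := ∑' k : ℕ, w ^ (k + 1) / ((k : ℝ) + 1) ^ 2

/-!
The odd part `χ` of the dilogarithm has derivative `artanh x / x`, and the involution
`x ↦ (1 - x) / (1 + x)` of `(0, 1)` turns `artanh x` into `-log x / 2`. Hence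
`χ x + χ ((1 - x) / (1 + x)) - log x * artanh x` has derivative zero, and its value is found by
letting `x` tend to `0`, where `χ 1 = π² / 8` comes from `ζ(2)`. The point `√2 - 1` is fixed by the
involution.
-/

open Real Set

section Dilogarithm

variable {x : ℝ}

theorem hasSum_one_div_add_one_sq :
    HasSum (fun k : ℕ => 1 / ((k : ℝ) + 1) ^ 2) (π ^ 2 / 6) := by
  simpa using (hasSum_nat_add_iff' 1).mpr hasSum_zeta_two

theorem norm_pow_div_sq_le (hx : x ∈ Icc (-1) 1) (k : ℕ) :
    ‖x ^ (k + 1) / ((k : ℝ) + 1) ^ 2‖ ≤ 1 / ((k : ℝ) + 1) ^ 2 := by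
  rw [norm_div, norm_pow, norm_pow, norm_of_nonneg (by positivity : (0 : ℝ) ≤ k + 1)]
  gcongr
  exact pow_le_one₀ (norm_nonneg x) (abs_le.mpr hx)

theorem hasSum_Li2 (hx : x ∈ Icc (-1) 1) :
    HasSum (fun k : ℕ => x ^ (k + 1) / ((k : ℝ) + 1) ^ 2) (Li2 x) :=
  (hasSum_one_div_add_one_sq.summable.of_norm_bounded (norm_pow_div_sq_le hx)).hasSum

theorem continuousOn_Li2 : ContinuousOn Li2 (Icc (-1) 1) :=
  continuousOn_tsum (fun k => by fun_prop) hasSum_one_div_add_one_sq.summable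
    fun k _ hx => norm_pow_div_sq_le hx k

theorem Li2_one : Li2 1 = π ^ 2 / 6 := by
  simpa only [Li2, one_pow] using hasSum_one_div_add_one_sq.tsum_eq

theorem Li2_add_Li2_neg (hx : x ∈ Icc (-1) 1) : Li2 x + Li2 (-x) = Li2 (x ^ 2) / 2 := by
  have hneg : -x ∈ Icc (-1) 1 := ⟨neg_le_neg hx.2, neg_le.mp hx.1⟩
  have hsq : x ^ 2 ∈ Icc (-1) 1 := ⟨by nlinarith, by nlinarith [hx.1, hx.2]⟩
  have hsum := (hasSum_Li2 hx).add (hasSum_Li2 hneg)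
  refine hsum.unique ?_
  rw [← zero_add (Li2 (x ^ 2) / 2)]
  refine HasSum.even_add_odd ?_ ?_
  · convert! hasSum_zero using 2 with k
    rw [Odd.neg_pow ⟨k, rfl⟩]
    ring
  · convert! (hasSum_Li2 hsq).div_const 2 using 2 with k
    rw [Even.neg_pow ⟨k + 1, by ring⟩]
    push_cast
    field_simp
    ring

theorem Li2_neg_one : Li2 (-1) = -(π ^ 2 / 12) := by
  have hdup := Li2_add_Li2_neg (x := 1) (by norm_num)
  rw [one_pow, Li2_one] at hdup
  linarith

theorem hasDerivAt_Li2_tsum (hx : |x| < 1) :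
    HasDerivAt Li2 (∑' k : ℕ, x ^ k / ((k : ℝ) + 1)) x := by
  obtain ⟨r, hxr, hr⟩ := exists_between hx
  have hr₀ : 0 < r := (abs_nonneg x).trans_lt hxr
  have hderiv (k : ℕ) (y : ℝ) : HasDerivAt (fun w : ℝ => w ^ (k + 1) / ((k : ℝ) + 1) ^ 2)
      (y ^ k / ((k : ℝ) + 1)) y := by
    refine ((hasDerivAt_pow (k + 1) y).div_const _).congr_deriv ?_
    push_cast
    field_simp
  have hbound (k : ℕ) (y : ℝ) (hy : y ∈ Ioo (-r) r) : ‖y ^ k / ((k : ℝ) + 1)‖ ≤ r ^ k := by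
    rw [norm_div, norm_pow, norm_of_nonneg (by positivity : (0 : ℝ) ≤ k + 1)]
    refine (div_le_self (by positivity) (by simp)).trans ?_
    gcongr
    exact (abs_lt.mpr hy).le
  exact hasDerivAt_tsum_of_isPreconnected (summable_geometric_of_lt_one hr₀.le hr)
    isOpen_Ioo isPreconnected_Ioo (fun k y _ => hderiv k y) hbound
    (y₀ := 0) ⟨neg_lt_zero.mpr hr₀, hr₀⟩ (hasSum_Li2 (by norm_num)).summable (abs_lt.mp hxr)

theorem hasDerivAt_Li2 (hx : |x| < 1) (hx₀ : x ≠ 0) :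
    HasDerivAt Li2 (-log (1 - x) / x) x := by
  refine (hasDerivAt_Li2_tsum hx).congr_deriv ?_
  rw [← ((hasSum_pow_div_log_of_abs_lt_one hx).div_const x).tsum_eq]
  congr 1 with k
  rw [pow_succ]
  field_simp

end Dilogarithm

section InverseHyperbolicTangent

variable {x : ℝ}

theorem artanh_eq_half_log_sub_log (hx : x ∈ Ioo (-1) 1) :
    artanh x = (log (1 + x) - log (1 - x)) / 2 := by
  rw [artanh_eq_half_log (Ioo_subset_Icc_self hx),
    log_div (by linarith [hx.1]) (by linarith [hx.2])]
  ring

theorem hasDerivAt_artanh (hx : x ∈ Ioo (-1) 1) : HasDerivAt artanh (1 / (1 - x ^ 2)) x := by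
  have hadd : 1 + x ≠ 0 := by linarith [hx.1]
  have hsub : 1 - x ≠ 0 := by linarith [hx.2]
  have hlog := ((((hasDerivAt_id x).const_add 1).log hadd).sub
    (((hasDerivAt_id x).const_sub 1).log hsub)).div_const 2
  refine (hlog.congr_of_eventuallyEq ?_).congr_deriv ?_
  · filter_upwards [isOpen_Ioo.mem_nhds hx] with y hy using artanh_eq_half_log_sub_log hy
  · rw [show 1 - x ^ 2 = (1 + x) * (1 - x) by ring]
    simp only [id]
    field_simp
    ring

theorem artanh_one_sub_div_one_add (hx : 0 < x) : artanh ((1 - x) / (1 + x)) = -log x / 2 := by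
  have hquot : (1 + (1 - x) / (1 + x)) / (1 - (1 - x) / (1 + x)) = x⁻¹ := by
    have hsub : 1 + x - (1 - x) ≠ 0 := by linarith
    field_simp
    ring
  rw [artanh, hquot, log_sqrt (by positivity), log_inv]

theorem continuousOn_log_mul_artanh :
    ContinuousOn (fun x => log x * artanh x) (Ioo (-1) 1) := by
  -- `artanh x = x * dslope artanh 0 x` absorbs the singularity of `log` into `x * log x`.
  have hslope : ContinuousOn (dslope artanh 0) (Ioo (-1) 1) :=
    (continuousOn_dslope (Ioo_mem_nhds (by norm_num) one_pos)).mpr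
      ⟨fun y hy => (hasDerivAt_artanh hy).continuousAt.continuousWithinAt,
        (hasDerivAt_artanh (by norm_num)).differentiableAt⟩
  refine (continuous_mul_log.continuousOn.mul hslope).congr fun y _ => ?_
  have hartanh : y * dslope artanh 0 y = artanh y := by
    simpa using sub_smul_dslope artanh 0 y
  rw [← hartanh]
  simp only [Pi.mul_apply]
  ring

end InverseHyperbolicTangent

section LegendreChi

variable {x : ℝ}

/-- The Legendre chi function `χ₂(x) = ∑ x ^ (2 * k + 1) / (2 * k + 1) ^ 2` of order two on
`[-1, 1]`, encoded as the odd part of the dilogarithm. -/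
noncomputable def legendreChi (x : ℝ) : ℝ := (Li2 x - Li2 (-x)) / 2

theorem legendreChi_zero : legendreChi 0 = 0 := by
  simp [legendreChi]

theorem legendreChi_one : legendreChi 1 = π ^ 2 / 8 := by
  rw [legendreChi, Li2_one, Li2_neg_one]
  ring

theorem continuousOn_legendreChi : ContinuousOn legendreChi (Icc (-1) 1) :=
  (continuousOn_Li2.sub (continuousOn_Li2.comp continuousOn_neg
    fun _ hx => ⟨neg_le_neg hx.2, neg_le.mp hx.1⟩)).div_const 2

theorem hasDerivAt_legendreChi (hx : x ∈ Ioo (-1) 1) (hx₀ : x ≠ 0) :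
    HasDerivAt legendreChi (artanh x / x) x := by
  have hpos := hasDerivAt_Li2 (abs_lt.mpr hx) hx₀
  have hneg := (hasDerivAt_Li2 (abs_neg x ▸ abs_lt.mpr hx) (neg_ne_zero.mpr hx₀)).comp x
    (hasDerivAt_neg x)
  refine ((hpos.sub hneg).div_const 2).congr_deriv ?_
  rw [artanh_eq_half_log_sub_log hx, sub_neg_eq_add]
  field_simp
  ring

theorem one_sub_div_one_add_mem_Ioo (hx : x ∈ Ioo 0 1) : (1 - x) / (1 + x) ∈ Ioo 0 1 := by
  obtain ⟨hx₀, hx₁⟩ := hx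
  exact ⟨div_pos (by linarith) (by linarith), (div_lt_one (by linarith)).mpr (by linarith)⟩

theorem hasDerivAt_one_sub_div_one_add (hx : 1 + x ≠ 0) :
    HasDerivAt (fun y => (1 - y) / (1 + y)) (-2 / (1 + x) ^ 2) x := by
  refine (((hasDerivAt_id x).const_sub 1).div ((hasDerivAt_id x).const_add 1) hx).congr_deriv ?_
  simp only [id]
  ring

/-- The defect in the reflection formula for `legendreChi` under `x ↦ (1 - x) / (1 + x)`, to be
shown constant on `[0, 1)`. It needs no separate value at `0`: the limit of `log x * artanh x` there
is `0`, as is its Lean value. -/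
noncomputable def legendreChiReflection (x : ℝ) : ℝ :=
  legendreChi x + legendreChi ((1 - x) / (1 + x)) - log x * artanh x

theorem legendreChiReflection_zero : legendreChiReflection 0 = π ^ 2 / 8 := by
  simp [legendreChiReflection, legendreChi_zero, legendreChi_one]

theorem continuousOn_legendreChiReflection : ContinuousOn legendreChiReflection (Ico 0 1) := by
  have hinvol : ContinuousOn (fun x : ℝ => (1 - x) / (1 + x)) (Ico 0 1) := fun x hx =>
    (hasDerivAt_one_sub_div_one_add (by linarith [hx.1])).continuousAt.continuousWithinAt
  have hmaps : MapsTo (fun x : ℝ => (1 - x) / (1 + x)) (Ico 0 1) (Icc (-1) 1) := fun x hx => by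
    have hpos : 0 < 1 + x := by linarith [hx.1]
    exact ⟨(le_div_iff₀ hpos).mpr (by linarith), (div_le_one hpos).mpr (by linarith [hx.1])⟩
  exact ((continuousOn_legendreChi.mono fun x hx => ⟨by linarith [hx.1], hx.2.le⟩).add
    (continuousOn_legendreChi.comp hinvol hmaps)).sub
      (continuousOn_log_mul_artanh.mono fun x hx => ⟨by linarith [hx.1], hx.2⟩)

theorem hasDerivAt_legendreChiReflection (hx : x ∈ Ioo 0 1) :
    HasDerivAt legendreChiReflection 0 x := by
  obtain ⟨hx₀, hx₁⟩ := hx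
  have hadd : 1 + x ≠ 0 := by linarith
  have hsub : 1 - x ≠ 0 := by linarith
  have hx' : x ∈ Ioo (-1) 1 := ⟨by linarith, hx₁⟩
  obtain ⟨hy₀, hy₁⟩ := one_sub_div_one_add_mem_Ioo ⟨hx₀, hx₁⟩
  have hreflected := (hasDerivAt_legendreChi ⟨by linarith, hy₁⟩ hy₀.ne').comp x
    (hasDerivAt_one_sub_div_one_add hadd)
  have hproduct := (hasDerivAt_log hx₀.ne').mul (hasDerivAt_artanh hx')
  refine (((hasDerivAt_legendreChi hx' hx₀.ne').add hreflected).sub hproduct).congr_deriv ?_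
  rw [artanh_one_sub_div_one_add hx₀, show 1 - x ^ 2 = (1 - x) * (1 + x) by ring]
  field_simp
  ring

theorem legendreChi_add_legendreChi_one_sub_div_one_add (hx : x ∈ Ioo 0 1) :
    legendreChi x + legendreChi ((1 - x) / (1 + x)) = π ^ 2 / 8 + log x * artanh x := by
  obtain ⟨_, _, hslope⟩ := exists_hasDerivAt_eq_slope legendreChiReflection (fun _ => 0) hx.1
    (continuousOn_legendreChiReflection.mono (Icc_subset_Ico_right hx.2))
    fun y hy => hasDerivAt_legendreChiReflection ⟨hy.1, hy.2.trans hx.2⟩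
  have hconst : legendreChiReflection x = legendreChiReflection 0 := by
    simpa [hx.1.ne', sub_eq_zero] using hslope.symm
  rw [legendreChiReflection_zero, legendreChiReflection] at hconst
  linarith

theorem legendreChi_sqrt_two_sub_one :
    legendreChi (√2 - 1) = π ^ 2 / 16 - log (√2 - 1) ^ 2 / 4 := by
  have hsq : √2 ^ 2 = 2 := sq_sqrt zero_le_two
  have hmem : √2 - 1 ∈ Ioo 0 1 := ⟨by nlinarith [sqrt_nonneg 2], by nlinarith [sqrt_nonneg 2]⟩
  have hfixed : (1 - (√2 - 1)) / (1 + (√2 - 1)) = √2 - 1 := by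
    rw [div_eq_iff (by linarith [hmem.1])]
    linarith
  have hartanh := artanh_one_sub_div_one_add hmem.1
  have hreflection := legendreChi_add_legendreChi_one_sub_div_one_add hmem
  rw [hfixed] at hartanh hreflection
  rw [hartanh] at hreflection
  linarith

end LegendreChi

theorem log_one_add_sqrt_two : log (1 + √2) = -log (√2 - 1) := by
  rw [← log_inv]
  congr 1
  refine eq_inv_of_mul_eq_one_left ?_
  linarith [sq_sqrt (zero_le_two (α := ℝ))]

/-- With α = ln(1+√2), Li₂(√2 − 1) − Li₂(1 − √2) = α²/2 − π²/8 + π²/4 − ln²(√2 − 1). -/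
theorem dilog_difference_identity :
    Li2 (Real.sqrt 2 - 1) - Li2 (1 - Real.sqrt 2) =
      Real.log (1 + Real.sqrt 2) ^ 2 / 2 - Real.pi ^ 2 / 8 + Real.pi ^ 2 / 4
        - Real.log (Real.sqrt 2 - 1) ^ 2 := by
  have hchi := legendreChi_sqrt_two_sub_one
  rw [legendreChi, neg_sub] at hchi
  rw [log_one_add_sqrt_two, neg_sq]
  linarith
end

section
/- For all real x, y with 0 ≤ x < 1 and 0 ≤ y < 1, the point (u, v) with u = arcosh(√((1 + x²)/(1 − x²y²))) and v = arcosh(√((1 + y²)/(1 − x²y²))) satisfies x = sinh u / cosh v and y = sinh v / cosh u. -/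
/-- The inverse hyperbolic cosine on [1, ∞): arcosh t = ln (t + √(t² − 1)). -/
noncomputable def arcosh (t : ℝ) : ℝ := Real.log (t + Real.sqrt (t ^ 2 - 1))

/-!
Put `a = cosh² u` and `b = cosh² v`. For `u, v ≥ 0` the equations `x = sinh u / cosh v` and
`y = sinh v / cosh u` amount to the linear system `a - 1 = x² b`, `b - 1 = y² a`, whose solution is
`a = (1 + x²) / (1 - x² y²)`, `b = (1 + y²) / (1 - x² y²)`.
-/

section

variable {K : Type*} [Field K] {x y : K}

theorem one_add_sq_div_sub_one (h : 1 - x ^ 2 * y ^ 2 ≠ 0) :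
    (1 + x ^ 2) / (1 - x ^ 2 * y ^ 2) - 1 = x ^ 2 * ((1 + y ^ 2) / (1 - x ^ 2 * y ^ 2)) := by
  field_simp
  ring

theorem one_le_one_add_sq_div [LinearOrder K] [IsStrictOrderedRing K]
    (h : x ^ 2 * y ^ 2 < 1) : 1 ≤ (1 + x ^ 2) / (1 - x ^ 2 * y ^ 2) := by
  have hD : 0 < 1 - x ^ 2 * y ^ 2 := sub_pos.2 h
  have hy : 0 ≤ (1 + y ^ 2) / (1 - x ^ 2 * y ^ 2) := div_nonneg (by positivity) hD.le
  rw [← sub_nonneg, one_add_sq_div_sub_one hD.ne']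
  exact mul_nonneg (sq_nonneg x) hy

end

section

variable {a b x y : ℝ}

theorem arcosh_eq_real_arcosh (t : ℝ) : arcosh t = Real.arcosh t := rfl

theorem cosh_arcosh_sqrt (ha : 1 ≤ a) : Real.cosh (arcosh (Real.sqrt a)) = Real.sqrt a := by
  rw [arcosh_eq_real_arcosh, Real.cosh_arcosh (Real.one_le_sqrt.2 ha)]

theorem sinh_arcosh_sqrt (ha : 1 ≤ a) : Real.sinh (arcosh (Real.sqrt a)) = Real.sqrt (a - 1) := by
  rw [arcosh_eq_real_arcosh, Real.sinh_arcosh (Real.one_le_sqrt.2 ha),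
    Real.sq_sqrt (zero_le_one.trans ha)]

theorem sinh_arcosh_sqrt_div_cosh_arcosh_sqrt (ha : 1 ≤ a) (hb : 1 ≤ b) :
    Real.sinh (arcosh (Real.sqrt a)) / Real.cosh (arcosh (Real.sqrt b)) =
      Real.sqrt ((a - 1) / b) := by
  rw [sinh_arcosh_sqrt ha, cosh_arcosh_sqrt hb, Real.sqrt_div (sub_nonneg.2 ha)]

theorem eq_sinh_div_cosh_of_sq_mul_sq_lt_one (hx : 0 ≤ x) (h : x ^ 2 * y ^ 2 < 1) :
    x = Real.sinh (arcosh (Real.sqrt ((1 + x ^ 2) / (1 - x ^ 2 * y ^ 2)))) /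
          Real.cosh (arcosh (Real.sqrt ((1 + y ^ 2) / (1 - x ^ 2 * y ^ 2)))) := by
  have ha : 1 ≤ (1 + x ^ 2) / (1 - x ^ 2 * y ^ 2) := one_le_one_add_sq_div h
  have hb : 1 ≤ (1 + y ^ 2) / (1 - x ^ 2 * y ^ 2) := by
    rw [mul_comm (x ^ 2)] at h ⊢
    exact one_le_one_add_sq_div h
  rw [sinh_arcosh_sqrt_div_cosh_arcosh_sqrt ha hb, one_add_sq_div_sub_one (sub_pos.2 h).ne',
    mul_div_cancel_right₀ _ (zero_lt_one.trans_le hb).ne', Real.sqrt_sq hx]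

end

theorem inverse_hyperbolic_change_general (x y : ℝ) (hx : 0 ≤ x) (hy : 0 ≤ y) (hxy : x * y < 1) :
    x = Real.sinh (arcosh (Real.sqrt ((1 + x ^ 2) / (1 - x ^ 2 * y ^ 2)))) /
          Real.cosh (arcosh (Real.sqrt ((1 + y ^ 2) / (1 - x ^ 2 * y ^ 2)))) ∧
    y = Real.sinh (arcosh (Real.sqrt ((1 + y ^ 2) / (1 - x ^ 2 * y ^ 2)))) /
          Real.cosh (arcosh (Real.sqrt ((1 + x ^ 2) / (1 - x ^ 2 * y ^ 2)))) := by
  have h : x ^ 2 * y ^ 2 < 1 := by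
    rw [← mul_pow]
    exact pow_lt_one₀ (mul_nonneg hx hy) hxy two_ne_zero
  refine ⟨eq_sinh_div_cosh_of_sq_mul_sq_lt_one hx h, ?_⟩
  rw [mul_comm (x ^ 2)] at h ⊢
  exact eq_sinh_div_cosh_of_sq_mul_sq_lt_one hy h

/-- For 0 ≤ x < 1 and 0 ≤ y < 1, the point (u, v) with
u = arcosh √((1 + x²)/(1 − x²y²)) and v = arcosh √((1 + y²)/(1 − x²y²))
satisfies x = sinh u / cosh v and y = sinh v / cosh u. -/
theorem inverse_hyperbolic_change (x y : ℝ) (hx0 : 0 ≤ x) (hx1 : x < 1)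
    (hy0 : 0 ≤ y) (hy1 : y < 1) :
    x = Real.sinh (arcosh (Real.sqrt ((1 + x ^ 2) / (1 - x ^ 2 * y ^ 2)))) /
          Real.cosh (arcosh (Real.sqrt ((1 + y ^ 2) / (1 - x ^ 2 * y ^ 2)))) ∧
    y = Real.sinh (arcosh (Real.sqrt ((1 + y ^ 2) / (1 - x ^ 2 * y ^ 2)))) /
          Real.cosh (arcosh (Real.sqrt ((1 + x ^ 2) / (1 - x ^ 2 * y ^ 2)))) :=
  inverse_hyperbolic_change_general x y hx0 hy0 (mul_lt_one_of_nonneg_of_lt_one_left hx0 hx1 hy1.le)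
end
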